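/- For any real J, the characteristic polynomial of the Jacobian matrix M = −I + (J/2^(K+1)) A equals (X + 1 − J/2)^(K/2) · (X + 1 + J/2)^(K/2) · (X + 1)^(2^K − K); in particular its eigenvalues are −1 + J/2 with multiplicity K/2, −1 − J/2 with multiplicity K/2, and −1 with multiplicity 2^K − K. -/

import Mathlib

/-- The value ±1 associated to a Boolean sign. -/
noncomputable def sgn (b : Bool) : ℝ := if b then 1 else -1

/-- The `2^K × 2^K` matrix with rows and columns indexed by sign vectors
`u, v ∈ {−1,1}^K` (encoded as `Fin K → Bool`), with entries
`A_{u,v} = Σ_{m=1}^K (−1)^m u_m v_m`. -/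
noncomputable def volcanoA (K : ℕ) : Matrix (Fin K → Bool) (Fin K → Bool) ℝ :=
  Matrix.of fun u v => ∑ m : Fin K, (-1 : ℝ) ^ ((m : ℕ) + 1) * sgn (u m) * sgn (v m)


lemma sgn_mul_self (b : Bool) : sgn b * sgn b = 1 := by
  cases b <;> simp [sgn]

lemma sgn_not (b : Bool) : sgn (!b) = - sgn b := by
  cases b <;> simp [sgn]

lemma sum_sgn_ne (K : ℕ) (m n : Fin K) (h : m ≠ n) :
    ∑ u : Fin K → Bool, sgn (u m) * sgn (u n) = 0 := by
  refine Finset.sum_involution (fun u _ => Function.update u m (!(u m))) ?_ ?_ ?_ ?_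
  · intro u _
    simp [Function.update_of_ne h.symm, sgn_not]
  · intro u _ _ he
    have := congrFun he m
    simp at this
  · intro u _
    exact Finset.mem_univ _
  · intro u _
    simp

open Polynomial in
lemma prod_alt (a : ℝ) (k : ℕ) :
    ∏ i ∈ Finset.range (k + k), (X + C (1 - a * (-1 : ℝ) ^ (i + 1))) =
      (X + C (1 - a)) ^ k * (X + C (1 + a)) ^ k := by
  induction k with
  | zero => simp
  | succ k ih =>
    have h1 : k + 1 + (k + 1) = k + k + 1 + 1 := by ring
    have he : (-1 : ℝ) ^ (k + k) = 1 := Even.neg_one_pow ⟨k, rfl⟩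
    rw [h1, Finset.prod_range_succ, Finset.prod_range_succ, ih]
    have e1 : (1 - a * (-1 : ℝ) ^ (k + k + 1)) = 1 + a := by
      rw [pow_succ, he]; ring
    have e2 : (1 - a * (-1 : ℝ) ^ (k + k + 1 + 1)) = 1 - a := by
      rw [pow_succ, pow_succ, he]; ring
    rw [e1, e2]
    ring

open Polynomial in
/-- For any real `J`, the characteristic polynomial of the Jacobian
`M = −I + (J/2^(K+1)) A` equals
`(X + 1 − J/2)^(K/2) · (X + 1 + J/2)^(K/2) · (X + 1)^(2^K − K)`: the
eigenvalues of `M` are `−1 + J/2` and `−1 − J/2`, each with multiplicity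
`K/2`, and `−1` with multiplicity `2^K − K`. -/
theorem stmt6 (K : ℕ) (hK : 0 < K) (hKeven : Even K) (J : ℝ) :
    (-(1 : Matrix (Fin K → Bool) (Fin K → Bool) ℝ) + (J / 2 ^ (K + 1)) • volcanoA K).charpoly =
      (X + C (1 - J / 2)) ^ (K / 2) * (X + C (1 + J / 2)) ^ (K / 2) *
        (X + C 1) ^ (2 ^ K - K) := by
  classical
  let P : Matrix (Fin K → Bool) (Fin K) ℝ :=
    Matrix.of fun u m => J / 2 ^ (K + 1) * (-1 : ℝ) ^ ((m : ℕ) + 1) * sgn (u m)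
  let Q : Matrix (Fin K) (Fin K → Bool) ℝ := Matrix.of fun m v => sgn (v m)
  have hM : -(1 : Matrix (Fin K → Bool) (Fin K → Bool) ℝ) + (J / 2 ^ (K + 1)) • volcanoA K
      = P * Q - Matrix.scalar _ (1 : ℝ) := by
    rw [map_one, sub_eq_add_neg, add_comm]
    congr 1
    ext u v
    simp only [volcanoA, P, Q, Matrix.smul_apply, Matrix.of_apply, Matrix.mul_apply, smul_eq_mul,
      Finset.mul_sum]
    exact Finset.sum_congr rfl fun m _ => by ring
  have hQP : Q * P = Matrix.diagonal fun m : Fin K => J / 2 * (-1 : ℝ) ^ ((m : ℕ) + 1) := by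
    ext m n
    have h1 : (Q * P) m n = J / 2 ^ (K + 1) * (-1 : ℝ) ^ ((n : ℕ) + 1) *
        ∑ u : Fin K → Bool, sgn (u m) * sgn (u n) := by
      simp only [P, Q, Matrix.of_apply, Matrix.mul_apply, Finset.mul_sum]
      exact Finset.sum_congr rfl fun m _ => by ring
    rw [h1]
    by_cases h : m = n
    · subst h
      simp only [sgn_mul_self, Matrix.diagonal_apply_eq]
      simp
      field_simp
      ring
    · rw [sum_sgn_ne K m n h, Matrix.diagonal_apply_ne _ h, mul_zero]
  have hle : Fintype.card (Fin K) ≤ Fintype.card (Fin K → Bool) := by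
    simpa using (Nat.lt_two_pow_self (n := K)).le
  rw [hM, Matrix.charpoly_sub_scalar, Matrix.charpoly_mul_comm_of_le P Q hle, hQP,
    Matrix.charpoly_diagonal]
  obtain ⟨k, rfl⟩ := hKeven
  have hk : (k + k) / 2 = k := by omega
  rw [hk, ← prod_alt, Finset.prod_range, Polynomial.mul_comp, Polynomial.prod_comp, mul_comm]
  congr 1
  · refine Finset.prod_congr rfl fun i _ => ?_
    simp only [sub_comp, X_comp, C_comp, C_sub]
    ring
  · simp
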